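/- Let Q be a commutative, integral quantale and let f : (X,α) → (Y,β) be a fully faithful Q-functor between symmetric Q-categories. Then f is essential if and only if f is dense, i.e., β y y' = ⨅ x, (β (f x) y ⇨ β (f x) y') for all y, y' ∈ Y. -/

import Mathlib

/-!
Write `d y y'` for the infimum `⨅ x, (β (f x) y ⇨ β (f x) y')`; always `β ≤ d` by transitivity.

*Essential implies dense.* Fix `a b : Y` and put `q = d a b`. Adjoining to `β` a link of weight `q`
between `a` and `b` gives a symmetric Q-category structure on `Y` (`glue`), namely
`β y y' ⊔ β y a * q * β b y' ⊔ β y b * q * β a y'`. Transitivity uses integrality to discard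
the factors coming from crossing the link twice. Since `β (f x) a * q ≤ β (f x) b`, the new
structure agrees with `β` on the image of `f`, so essentiality applied to the identity of `Y`
forces it to equal `β`; its value at `(a, b)` is at least `q`, hence `q ≤ β a b`.

*Dense implies essential.* Let `g` be as in the definition of essential. Density at `(y, f x)`
gives `γ (g (f x)) (g y) ≤ β (f x) y`, because composing with any `β (f x') y` lands in
`γ (g (f x')) (g (f x)) = β (f x') (f x)`. Density at `(y, y')` then gives
`γ (g y) (g y') ≤ β y y'`.
-/

universe u v

/-- The residuation `p ⇨ r` of a quantale, right adjoint to multiplication: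
`p * q ≤ r ↔ q ≤ qimp p r`. -/
def qimp {Q : Type*} [CompleteLattice Q] [Mul Q] (p r : Q) : Q :=
  sSup {q | p * q ≤ r}

theorem le_qimp_iff {Q : Type*} [CompleteLattice Q] [CommMonoid Q] [IsQuantale Q] {p q r : Q} :
    q ≤ qimp p r ↔ p * q ≤ r :=
  Quantale.rightMulResiduation_le_iff_mul_le

/-- The Q-relation obtained from `β` by adjoining a link of weight `q` between `a` and `b`,
crossed at most once. -/
def glue {Q : Type*} [CompleteLattice Q] [Mul Q] {Y : Type*} (β : Y → Y → Q) (a b : Y) (q : Q)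
    (y y' : Y) : Q :=
  β y y' ⊔ β y a * q * β b y' ⊔ β y b * q * β a y'

section glue

variable {Q : Type*} [CompleteLattice Q] [CommMonoid Q] [IsQuantale Q] {Y : Type*}
  {β : Y → Y → Q} {a b : Y} {q : Q}

theorem glue_symm (hsym : ∀ y y', β y y' = β y' y) (y y' : Y) :
    glue β a b q y y' = glue β a b q y' y := by
  have h (c d : Y) : β y c * q * β d y' = β y' d * q * β c y := by
    rw [hsym y c, hsym d y']
    ac_rfl
  unfold glue
  rw [hsym y y', h a b, h b a, sup_right_comm]

theorem glue_trans (hint : (⊤ : Q) = 1) (htrans : ∀ x y z, β y z * β x y ≤ β x z) (x y z : Y) :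
    glue β a b q y z * glue β a b q x y ≤ glue β a b q x z := by
  have h1 (p : Q) : p ≤ 1 := hint ▸ le_top
  have ht (x y z : Y) : β x y * β y z ≤ β x z := by
    rw [mul_comm]; exact htrans x y z
  -- a path starting without the link and then crossing it
  have hleft (c d : Y) : (β y c * q * β d z) * β x y ≤ β x c * q * β d z :=
    calc _ = (β x y * β y c) * q * β d z := by ac_rfl
      _ ≤ _ := by gcongr; exact ht _ _ _
  -- a path crossing the link first
  have hright (c d : Y) : β y z * (β x c * q * β d y) ≤ β x c * q * β d z :=
    calc _ = β x c * q * (β d y * β y z) := by ac_rfl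
      _ ≤ _ := by gcongr; exact ht _ _ _
  -- the link crossed twice in the same direction: the middle part is bounded by `1`
  have hsame (c d : Y) : (β y c * q * β d z) * (β x c * q * β d y) ≤ β x c * q * β d z :=
    calc _ = β x c * q * β d z * (q * (β d y * β y c)) := by ac_rfl
      _ ≤ β x c * q * β d z * 1 := by gcongr; exact h1 _
      _ = _ := mul_one _
  -- the link crossed back and forth
  have hback (c d : Y) : (β y d * q * β c z) * (β x c * q * β d y) ≤ β x z :=
    calc _ = β x c * β c z * (q * q * (β d y * β y d)) := by ac_rfl
      _ ≤ β x z * 1 := by gcongr; exacts [ht _ _ _, h1 _]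
      _ = _ := mul_one _
  unfold glue
  simp only [Quantale.sup_mul_distrib, Quantale.mul_sup_distrib, sup_le_iff]
  have i0 : β x z ≤ β x z ⊔ β x a * q * β b z ⊔ β x b * q * β a z :=
    le_sup_left.trans le_sup_left
  have i1 : β x a * q * β b z ≤ β x z ⊔ β x a * q * β b z ⊔ β x b * q * β a z :=
    le_sup_right.trans le_sup_left
  have i2 : β x b * q * β a z ≤ β x z ⊔ β x a * q * β b z ⊔ β x b * q * β a z :=
    le_sup_right
  refine ⟨⟨⟨⟨(htrans x y z).trans i0, (hleft a b).trans i1⟩, (hleft b a).trans i2⟩,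
    ⟨(hright a b).trans i1, (hsame a b).trans i1⟩, (hback a b).trans i0⟩,
    ⟨(hright b a).trans i2, (hback b a).trans i0⟩, (hsame b a).trans i2⟩

end glue

/-- a fully faithful Q-functor between symmetric Q-categories is
essential if and only if it is dense. -/
theorem essential_iff_dense
    {Q : Type v} [CompleteLattice Q] [CommMonoid Q] [IsQuantale Q]
    (hint : (⊤ : Q) = 1)
    {X Y : Type u} (α : X → X → Q) (β : Y → Y → Q)
    (hα1 : ∀ x, α x x = 1)
    (hαsym : ∀ x y, α x y = α y x)
    (hαtrans : ∀ x y z, α y z * α x y ≤ α x z)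
    (hβ1 : ∀ y, β y y = 1)
    (hβsym : ∀ y y', β y y' = β y' y)
    (hβtrans : ∀ x y z, β y z * β x y ≤ β x z)
    (f : X → Y)
    (hff : ∀ x x', β (f x) (f x') = α x x') :
    (∀ (Z : Type (max u v)) (γ : Z → Z → Q),
      (∀ z, γ z z = 1) → (∀ z z', γ z z' = γ z' z) →
      (∀ x y z, γ y z * γ x y ≤ γ x z) →
      ∀ g : Y → Z, (∀ y y', β y y' ≤ γ (g y) (g y')) →
      (∀ x x', γ (g (f x)) (g (f x')) = α x x') →
      (∀ y y', γ (g y) (g y') = β y y'))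
    ↔ (∀ y y', β y y' = ⨅ x, qimp (β (f x) y) (β (f x) y')) := by
  have ht (x y z : Y) : β x y * β y z ≤ β x z := by
    rw [mul_comm]; exact hβtrans x y z
  constructor
  · intro hess a b
    refine le_antisymm (le_iInf fun x => le_qimp_iff.2 (ht _ _ _)) ?_
    set q := ⨅ x, qimp (β (f x) a) (β (f x) b) with hq
    have hqx (x : X) : β (f x) a * q ≤ β (f x) b := le_qimp_iff.1 (iInf_le _ x)
    have hle (y y' : Y) : β y y' ≤ glue β a b q y y' := le_sup_left.trans le_sup_left
    -- `ULift` moves `Y` to the universe over which essentiality quantifies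
    have key := hess (ULift.{v} Y) (fun z z' => glue β a b q z.down z'.down)
      (fun z => le_antisymm (hint ▸ le_top) ((hβ1 z.down).symm.le.trans (hle _ _)))
      (fun z z' => glue_symm hβsym _ _)
      (fun x y z => glue_trans hint hβtrans _ _ _)
      ULift.up hle
      (fun x x' => by
        rw [← hff]
        refine le_antisymm (sup_le (sup_le le_rfl ?_) ?_) (hle _ _)
        · calc β (f x) a * q * β b (f x') ≤ β (f x) b * β b (f x') := by gcongr; exact hqx x
            _ ≤ _ := ht _ _ _
        · calc β (f x) b * q * β a (f x') = β (f x) b * (β (f x') a * q) := by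
                rw [hβsym a]; ac_rfl
            _ ≤ β (f x) b * β b (f x') := by rw [hβsym b]; gcongr; exact hqx x'
            _ ≤ _ := ht _ _ _)
      a b
    calc q = β a a * q * β b b := by simp [hβ1]
      _ ≤ glue β a b q a b := le_sup_right.trans le_sup_left
      _ = β a b := key
  · intro hd Z γ hγ1 hγsym hγtrans g hg hgf y y'
    have ht' (x y z : Z) : γ x y * γ y z ≤ γ x z := by
      rw [mul_comm]; exact hγtrans x y z
    have hfx (x : X) (y : Y) : γ (g (f x)) (g y) ≤ β (f x) y := by
      rw [hβsym, hd y (f x)]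
      refine le_iInf fun x' => le_qimp_iff.2 ?_
      calc β (f x') y * γ (g (f x)) (g y) ≤ γ (g (f x')) (g y) * γ (g y) (g (f x)) := by
            rw [hγsym (g (f x))]; gcongr; exact hg _ _
        _ ≤ γ (g (f x')) (g (f x)) := ht' _ _ _
        _ = β (f x') (f x) := by rw [hgf, hff]
    refine le_antisymm ?_ (hg y y')
    rw [hd y y']
    refine le_iInf fun x => le_qimp_iff.2 ?_
    calc β (f x) y * γ (g y) (g y') ≤ γ (g (f x)) (g y) * γ (g y) (g y') := by
          gcongr; exact hg _ _
      _ ≤ γ (g (f x)) (g y') := ht' _ _ _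
      _ ≤ β (f x) y' := hfx x y'
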